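/- arXiv:2509.10388 — 6 statements merged into one kernel-verified Lean document; each statement's English description precedes it below -/
import Mathlib

section
/- Let g > 0 be a gain factor, and for two scene points i and j let ρ_i, ρ_j ∈ (0,1) be albedos and η_i, η_j > 0 be shading values, with visible intensities I_v,i = g·ρ_i·η_i and I_v,j = g·ρ_j·η_j and heat source intensities S_i = (1−ρ_i)·η_i and S_j = (1−ρ_j)·η_j. If S_i > S_j and I_v,i < I_v,j, then ρ_i < ρ_j. -/
/-! With the gain divided out of the visible intensities, the convex combination of the positive
contrasts `Ivj - Ivi` and `Si - Sj` with weights `1 - ρj` and `ρj` is `(ρj - ρi) * ηi`: the shading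
`ηj` cancels. -/

section OrderedRing

variable {R : Type*} [Ring R] [LinearOrder R] [IsStrictOrderedRing R]

lemma lt_of_mul_lt_mul_of_one_sub_mul_lt_one_sub_mul {a b x y : R} (hb : b ∈ Set.Icc 0 1)
    (hx : 0 ≤ x) (hmul : a * x < b * y) (hsub : (1 - b) * y < (1 - a) * x) : a < b := by
  have hdiff : 0 < (b - a) * x := calc
    0 < (1 - b) * (b * y - a * x) + b * ((1 - a) * x - (1 - b) * y) :=
      convex_Ioi (𝕜 := R) (0 : R) (sub_pos.2 hmul) (sub_pos.2 hsub)
        (sub_nonneg.2 hb.2) hb.1 (sub_add_cancel 1 b)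
    _ = (b - a) * x := by noncomm_ring
  exact sub_pos.1 (pos_of_mul_pos_left hdiff hx)

theorem albedo_ordinal_pos_general {g ρi ρj ηi ηj Ivi Ivj Si Sj : R}
    (hg : 0 < g) (hρj : ρj ∈ Set.Icc 0 1) (hηi : 0 ≤ ηi)
    (hIvi : Ivi = g * ρi * ηi) (hIvj : Ivj = g * ρj * ηj)
    (hSi : Si = (1 - ρi) * ηi) (hSj : Sj = (1 - ρj) * ηj)
    (hS : Si > Sj) (hIv : Ivi < Ivj) :
    ρi < ρj := by
  subst hIvi hIvj hSi hSj
  have hreflected : ρi * ηi < ρj * ηj := by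
    simpa only [mul_assoc, mul_lt_mul_iff_right₀ hg] using hIv
  exact lt_of_mul_lt_mul_of_one_sub_mul_lt_one_sub_mul hρj hηi hreflected hS

end OrderedRing

theorem albedo_ordinal_pos
    (g ρi ρj ηi ηj Ivi Ivj Si Sj : ℝ)
    (hg : 0 < g)
    (hρi : ρi ∈ Set.Ioo (0 : ℝ) 1) (hρj : ρj ∈ Set.Ioo (0 : ℝ) 1)
    (hηi : 0 < ηi) (hηj : 0 < ηj)
    (hIvi : Ivi = g * ρi * ηi) (hIvj : Ivj = g * ρj * ηj)
    (hSi : Si = (1 - ρi) * ηi) (hSj : Sj = (1 - ρj) * ηj)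
    (hS : Si > Sj) (hIv : Ivi < Ivj) :
    ρi < ρj := by
  exact albedo_ordinal_pos_general hg (Set.Ioo_subset_Icc_self hρj) hηi.le
    hIvi hIvj hSi hSj hS hIv
end

section
/- Let g > 0 and β > 1, and for two scene points i and j let ρ_i, ρ_j ∈ (0,1) be albedos and η_i, η_j > 0 be shading values, with visible intensities I_v,i = g·ρ_i·η_i and I_v,j = g·ρ_j·η_j and heat source intensities S_i = (β−ρ_i)·η_i and S_j = (β−ρ_j)·η_j. If S_i > S_j and I_v,i < I_v,j, then ρ_i < ρ_j; and if S_i < S_j and I_v,i > I_v,j, then ρ_i > ρ_j. -/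
/-!
A dimmer point has lower albedo or weaker shading, and a hotter point has lower albedo or stronger
shading; the two shading alternatives exclude each other, so a point that is both dimmer and hotter
has lower albedo.
-/

theorem lt_or_lt_of_mul_lt_mul_of_nonneg {R : Type*} [Mul R] [Zero R] [LinearOrder R]
    [PosMulMono R] [MulPosMono R] {a b c d : R} (ha : 0 ≤ a) (hd : 0 ≤ d)
    (h : a * c < b * d) : a < b ∨ c < d := by
  by_contra! hle
  exact h.not_ge (mul_le_mul_of_nonneg' hle.1 hle.2 hd ha)

theorem albedo_ordinal_beta_general {R : Type*} [Ring R] [LinearOrder R] [IsOrderedRing R]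
    {g β ρi ρj ηi ηj : R} (hg : 0 ≤ g) (hρi : 0 ≤ ρi) (hρj : ρj ≤ β)
    (hηi : 0 ≤ ηi) (hηj : 0 ≤ ηj)
    (hS : (β - ρj) * ηj < (β - ρi) * ηi) (hIv : g * ρi * ηi < g * ρj * ηj) : ρi < ρj := by
  have hdimmer : ρi * ηi < ρj * ηj := by
    rw [mul_assoc, mul_assoc] at hIv
    exact lt_of_not_ge fun hle ↦ hIv.not_ge (mul_le_mul_of_nonneg_left hle hg)
  have hvisible : ρi < ρj ∨ ηi < ηj := lt_or_lt_of_mul_lt_mul_of_nonneg hρi hηj hdimmer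
  have hheat : ρi < ρj ∨ ηj < ηi :=
    (lt_or_lt_of_mul_lt_mul_of_nonneg (sub_nonneg.2 hρj) hηi hS).imp_left
      (sub_lt_sub_iff_left β).1
  rcases hvisible with hρ | hη
  · exact hρ
  · exact hheat.resolve_right hη.not_gt

theorem albedo_ordinal_beta
    (g β ρi ρj ηi ηj Ivi Ivj Si Sj : ℝ)
    (hg : 0 < g) (hβ : 1 < β)
    (hρi : ρi ∈ Set.Ioo (0 : ℝ) 1) (hρj : ρj ∈ Set.Ioo (0 : ℝ) 1)
    (hηi : 0 < ηi) (hηj : 0 < ηj)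
    (hIvi : Ivi = g * ρi * ηi) (hIvj : Ivj = g * ρj * ηj)
    (hSi : Si = (β - ρi) * ηi) (hSj : Sj = (β - ρj) * ηj) :
    (Si > Sj → Ivi < Ivj → ρi < ρj) ∧ (Si < Sj → Ivi > Ivj → ρi > ρj) := by
  subst hIvi hIvj hSi hSj
  exact ⟨albedo_ordinal_beta_general hg.le hρi.1.le (hρj.2.trans hβ).le hηi.le hηj.le,
    albedo_ordinal_beta_general hg.le hρj.1.le (hρi.2.trans hβ).le hηj.le hηi.le⟩
end

section
/- Let ρ, η : ℝ → ℝ be functions differentiable at a point x with ρ(x) ∈ (0,1) and η(x) > 0, let g > 0 and β > 1 be constants, and define I_v = g·ρ·η and S = (β−ρ)·η. If η′(x) = 0 and ρ′(x) ≠ 0, then I_v′(x)·S′(x) < 0. -/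
/-!
Where `η` is stationary, the product rule gives `I_v' = g ρ' η` and `S' = -ρ' η`, so that
`I_v' S' = -g (ρ' η)²`. This holds for the derivative along any direction in which `η` is
stationary, so the spatial domain need not be one-dimensional.
-/

theorem fderiv_fun_mul_apply_of_fderiv_right_eq_zero
    {𝕜 E 𝔸 : Type*} [NontriviallyNormedField 𝕜] [NormedAddCommGroup E] [NormedSpace 𝕜 E]
    [NormedRing 𝔸] [NormedAlgebra 𝕜 𝔸] {a b : E → 𝔸} {x v : E}
    (ha : DifferentiableAt 𝕜 a x) (hb : DifferentiableAt 𝕜 b x) (hb' : fderiv 𝕜 b x v = 0) :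
    fderiv 𝕜 (fun y => a y * b y) x v = fderiv 𝕜 a x v * b x := by
  simp [fderiv_fun_mul' ha hb, hb']

theorem albedo_edge_opposite_signs_beta_general
    {E : Type*} [NormedAddCommGroup E] [NormedSpace ℝ E] {ρ η : E → ℝ} {x v : E} {g : ℝ} (β : ℝ)
    (hη : DifferentiableAt ℝ η x) (hηx : η x ≠ 0) (hg : 0 < g)
    (hη' : fderiv ℝ η x v = 0) (hρ' : fderiv ℝ ρ x v ≠ 0) :
    fderiv ℝ (fun y => g * ρ y * η y) x v * fderiv ℝ (fun y => (β - ρ y) * η y) x v < 0 := by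
  have hρ : DifferentiableAt ℝ ρ x := by
    contrapose! hρ'
    simp [fderiv_zero_of_not_differentiableAt hρ']
  have visible_deriv :
      fderiv ℝ (fun y => g * ρ y * η y) x v = g * (fderiv ℝ ρ x v * η x) := by
    rw [fderiv_fun_mul_apply_of_fderiv_right_eq_zero (hρ.const_mul g) hη hη', fderiv_const_mul hρ]
    simp [mul_assoc]
  have heat_deriv :
      fderiv ℝ (fun y => (β - ρ y) * η y) x v = -(fderiv ℝ ρ x v * η x) := by
    rw [fderiv_fun_mul_apply_of_fderiv_right_eq_zero (hρ.const_sub β) hη hη', fderiv_const_sub]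
    simp
  calc
    _ = -(g * (fderiv ℝ ρ x v * η x) ^ 2) := by rw [visible_deriv, heat_deriv]; ring
    _ < 0 := neg_neg_of_pos (by positivity)

theorem albedo_edge_opposite_signs_beta
    (ρ η : ℝ → ℝ) (x g β : ℝ)
    (hρ : DifferentiableAt ℝ ρ x) (hη : DifferentiableAt ℝ η x)
    (hρx : ρ x ∈ Set.Ioo (0 : ℝ) 1) (hηx : 0 < η x)
    (hg : 0 < g) (hβ : 1 < β)
    (hη' : deriv η x = 0) (hρ' : deriv ρ x ≠ 0) :
    deriv (fun y => g * ρ y * η y) x * deriv (fun y => (β - ρ y) * η y) x < 0 := by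
  simp only [← fderiv_apply_one_eq_deriv] at hη' hρ' ⊢
  exact albedo_edge_opposite_signs_beta_general β hη hηx.ne' hg hη' hρ'
end

section
/- Let g > 0, c_1 > 0, and c_3 ∈ ℝ, and for two scene points i and j let ρ_i, ρ_j ∈ (0,1) be albedos, η_i, η_j > 0 be shading values, I_v,i = g·ρ_i·η_i and I_v,j = g·ρ_j·η_j be visible intensities, and I_t,i, I_t,j be thermal intensities satisfying (1−ρ_i)·η_i = c_1·I_t,i − c_3 and (1−ρ_j)·η_j = c_1·I_t,j − c_3. If I_v,i > I_v,j and I_t,i < I_t,j, then ρ_i > ρ_j; and if I_v,i < I_v,j and I_t,i > I_t,j, then ρ_i < ρ_j. -/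
/-!
If `ρi ≤ ρj`, then point `i` can reflect more light than point `j` only under stronger shading,
`ηj < ηi`, whereas it can absorb at most as much light only under shading `ηi ≤ ηj`. The two cannot
hold together. Only the order of the measured intensities enters, so any monotone camera responses
can replace the gain `g` and the affine map `c₁ * I - c₃`.
-/

section OrderedMul

variable {M : Type*} [Mul M] [Zero M] [Preorder M] {a b x y : M}

theorem lt_of_mul_lt_mul_of_coeff_le [PosMulReflectLT M] [MulPosMono M]
    (hb : 0 ≤ b) (hx : 0 ≤ x) (hab : a ≤ b) (h : b * y < a * x) : y < x :=
  lt_of_mul_lt_mul_left (h.trans_le (mul_le_mul_of_nonneg_right hab hx)) hb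

theorem le_of_mul_le_mul_of_coeff_le [PosMulReflectLE M] [MulPosMono M]
    (ha : 0 < a) (hy : 0 ≤ y) (hba : b ≤ a) (h : a * x ≤ b * y) : x ≤ y :=
  le_of_mul_le_mul_left (h.trans (mul_le_mul_of_nonneg_right hba hy)) ha

end OrderedMul

section OrderedRing

variable {R : Type*} [Ring R] [LinearOrder R] [IsStrictOrderedRing R]

theorem lt_of_mul_lt_mul_of_one_sub_mul_le {a b x y : R}
    (ha : a < 1) (hb : 0 ≤ b) (hx : 0 ≤ x) (hy : 0 ≤ y)
    (hreflected : b * y < a * x) (habsorbed : (1 - a) * x ≤ (1 - b) * y) : b < a := by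
  by_contra! hab
  have hyx : y < x := lt_of_mul_lt_mul_of_coeff_le hb hx hab hreflected
  have hxy : x ≤ y :=
    le_of_mul_le_mul_of_coeff_le (sub_pos.2 ha) hy (sub_le_sub_left hab 1) habsorbed
  exact hyx.not_ge hxy

theorem albedo_ordinal_thermal_general {V T : Type*} [Preorder V] [Preorder T]
    {visible : R → V} {heat : T → R} (hvisible : Monotone visible) (hheat : Monotone heat)
    {ρi ρj ηi ηj : R} {Ivi Ivj : V} {Iti Itj : T}
    (hρi : ρi < 1) (hρj : 0 ≤ ρj) (hηi : 0 ≤ ηi) (hηj : 0 ≤ ηj)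
    (hIvi : Ivi = visible (ρi * ηi)) (hIvj : Ivj = visible (ρj * ηj))
    (hSi : (1 - ρi) * ηi = heat Iti) (hSj : (1 - ρj) * ηj = heat Itj)
    (hIv : Ivj < Ivi) (hIt : Iti ≤ Itj) : ρj < ρi := by
  have hreflected : ρj * ηj < ρi * ηi := hvisible.reflect_lt (hIvj ▸ hIvi ▸ hIv)
  have habsorbed : (1 - ρi) * ηi ≤ (1 - ρj) * ηj := by
    rw [hSi, hSj]
    exact hheat hIt
  exact lt_of_mul_lt_mul_of_one_sub_mul_le hρi hρj hηi hηj hreflected habsorbed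

end OrderedRing

theorem albedo_ordinal_thermal
    (g c₁ c₃ ρi ρj ηi ηj Ivi Ivj Iti Itj : ℝ)
    (hg : 0 < g) (hc₁ : 0 < c₁)
    (hρi : ρi ∈ Set.Ioo (0 : ℝ) 1) (hρj : ρj ∈ Set.Ioo (0 : ℝ) 1)
    (hηi : 0 < ηi) (hηj : 0 < ηj)
    (hIvi : Ivi = g * ρi * ηi) (hIvj : Ivj = g * ρj * ηj)
    (hSi : (1 - ρi) * ηi = c₁ * Iti - c₃)
    (hSj : (1 - ρj) * ηj = c₁ * Itj - c₃) :
    (Ivi > Ivj → Iti < Itj → ρi > ρj) ∧ (Ivi < Ivj → Iti > Itj → ρi < ρj) := by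
  have hvisible : Monotone (g * ·) := monotone_mul_left_of_nonneg hg.le
  have hheat : Monotone (c₁ * · - c₃) := fun _ _ h ↦
    sub_le_sub_right (mul_le_mul_of_nonneg_left h hc₁.le) c₃
  rw [mul_assoc] at hIvi hIvj
  exact ⟨fun hIv hIt ↦ albedo_ordinal_thermal_general hvisible hheat hρi.2 hρj.1.le hηi.le hηj.le
      hIvi hIvj hSi hSj hIv hIt.le,
    fun hIv hIt ↦ albedo_ordinal_thermal_general hvisible hheat hρj.2 hρi.1.le hηj.le hηi.le
      hIvj hIvi hSj hSi hIv hIt.le⟩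
end

section
/- Let ρ, η, I_t : ℝ → ℝ be functions differentiable at a point x with ρ(x) ∈ (0,1) and η(x) > 0, let g > 0 and c_1 > 0 and c_3 ∈ ℝ be constants, and define I_v = g·ρ·η. Suppose (1−ρ(y))·η(y) = c_1·I_t(y) − c_3 for all y in a neighborhood of x. If η′(x) = 0 and ρ′(x) ≠ 0 (an albedo-dominant edge), then I_v′(x)·I_t′(x) < 0. -/
/-!
Along a direction in which the shading `η` is stationary, the product rule lets only the albedo
vary: the visible intensity `g ρ η` changes at the rate `g (ρ' η)`, while the heat source
`(1 - ρ) η = c₁ It - c₃` changes at the rate `-(ρ' η)`. Light that is not reflected is absorbed, so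
an albedo edge moves the two images in opposite directions.
-/

section

variable {𝕜 E : Type*} [NontriviallyNormedField 𝕜] [NormedAddCommGroup E] [NormedSpace 𝕜 E]

lemma fderiv_mul_apply_of_fderiv_right_apply_eq_zero {𝔸 : Type*} [NormedRing 𝔸]
    [NormedAlgebra 𝕜 𝔸] {f h : E → 𝔸} {x v : E} (hf : DifferentiableAt 𝕜 f x)
    (hh : DifferentiableAt 𝕜 h x) (hh' : fderiv 𝕜 h x v = 0) :
    fderiv 𝕜 (fun y => f y * h y) x v = fderiv 𝕜 f x v * h x := by
  simp [fderiv_fun_mul' hf hh, hh']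

lemma mul_fderiv_thermal_apply_eq_neg {ρ η It : E → 𝕜} {x v : E} {c₁ c₃ : 𝕜}
    (hρ : DifferentiableAt 𝕜 ρ x) (hη : DifferentiableAt 𝕜 η x)
    (hrel : ∀ᶠ y in nhds x, (1 - ρ y) * η y = c₁ * It y - c₃)
    (hη' : fderiv 𝕜 η x v = 0) :
    c₁ * fderiv 𝕜 It x v = -(fderiv 𝕜 ρ x v * η x) :=
  calc
    c₁ * fderiv 𝕜 It x v = fderiv 𝕜 (c₁ • It) x v := by
      rw [fderiv_const_smul_field]; rfl
    _ = fderiv 𝕜 (fun y => c₁ * It y - c₃) x v := by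
      rw [fderiv_sub_const]; rfl
    _ = fderiv 𝕜 (fun y => (1 - ρ y) * η y) x v := by
      rw [Filter.EventuallyEq.fderiv_eq hrel]
    _ = fderiv 𝕜 (fun y => 1 - ρ y) x v * η x :=
      fderiv_mul_apply_of_fderiv_right_apply_eq_zero (hρ.const_sub 1) hη hη'
    _ = -(fderiv 𝕜 ρ x v * η x) := by
      rw [fderiv_const_sub, neg_apply, neg_mul]

end

theorem albedo_edge_thermal_general {E : Type*} [NormedAddCommGroup E] [NormedSpace ℝ E]
    {ρ η It : E → ℝ} {x v : E} {g c₁ c₃ : ℝ}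
    (hρ : DifferentiableAt ℝ ρ x) (hη : DifferentiableAt ℝ η x) (hηx : η x ≠ 0)
    (hg : 0 < g) (hc₁ : 0 < c₁)
    (hrel : ∀ᶠ y in nhds x, (1 - ρ y) * η y = c₁ * It y - c₃)
    (hη' : fderiv ℝ η x v = 0) (hρ' : fderiv ℝ ρ x v ≠ 0) :
    fderiv ℝ (fun y => g * ρ y * η y) x v * fderiv ℝ It x v < 0 := by
  have visible : fderiv ℝ (fun y => g * ρ y * η y) x v = g * (fderiv ℝ ρ x v * η x) := by
    rw [fderiv_mul_apply_of_fderiv_right_apply_eq_zero (hρ.const_mul g) hη hη',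
      fderiv_const_mul hρ, smul_apply, smul_eq_mul, mul_assoc]
  have thermal : c₁ * fderiv ℝ It x v = -(fderiv ℝ ρ x v * η x) :=
    mul_fderiv_thermal_apply_eq_neg hρ hη hrel hη'
  have albedo_rate_ne_zero : fderiv ℝ ρ x v * η x ≠ 0 := mul_ne_zero hρ' hηx
  refine neg_of_mul_neg_right (a := c₁) ?_ hc₁.le
  calc
    c₁ * (fderiv ℝ (fun y => g * ρ y * η y) x v * fderiv ℝ It x v)
        = -(g * (fderiv ℝ ρ x v * η x) ^ 2) := by
      rw [mul_left_comm, thermal, visible]; ring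
    _ < 0 := neg_neg_of_pos (mul_pos hg (sq_pos_of_ne_zero albedo_rate_ne_zero))

theorem albedo_edge_thermal
    (ρ η It : ℝ → ℝ) (x g c₁ c₃ : ℝ)
    (hρ : DifferentiableAt ℝ ρ x) (hη : DifferentiableAt ℝ η x)
    (hIt : DifferentiableAt ℝ It x)
    (hρx : ρ x ∈ Set.Ioo (0 : ℝ) 1) (hηx : 0 < η x)
    (hg : 0 < g) (hc₁ : 0 < c₁)
    (hrel : ∀ᶠ y in nhds x, (1 - ρ y) * η y = c₁ * It y - c₃)
    (hη' : deriv η x = 0) (hρ' : deriv ρ x ≠ 0) :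
    deriv (fun y => g * ρ y * η y) x * deriv It x < 0 :=
  albedo_edge_thermal_general (v := 1) hρ hη hηx.ne' hg hc₁ hrel hη' hρ'
end

section
/- Let ρ, η, I_t : ℝ → ℝ be functions differentiable at a point x with ρ(x) ∈ (0,1) and η(x) > 0, let g > 0 and c_1 > 0 and c_3 ∈ ℝ be constants, and define I_v = g·ρ·η. Suppose (1−ρ(y))·η(y) = c_1·I_t(y) − c_3 for all y in a neighborhood of x. If ρ′(x) = 0 and η′(x) ≠ 0 (a shading-dominant edge), then I_v′(x)·I_t′(x) > 0. -/
/-!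
At a point where `ρ` is stationary, the product rule leaves only the variation of `η`: the visible
image has gradient `g ρ ∇η`, and differentiating the affine relation gives the thermal image the
gradient `c₁⁻¹ (1 - ρ) ∇η`. Both are positive multiples of `∇η`, so their inner product is a
positive multiple of `‖∇η‖²`.
-/

open scoped Gradient RealInnerProductSpace

section Stationary

variable {𝕜 E : Type*} [NontriviallyNormedField 𝕜] [NormedAddCommGroup E] [NormedSpace 𝕜 E]
  {ρ η It : E → 𝕜} {η' : E →L[𝕜] 𝕜} {x : E}

theorem hasFDerivAt_smul_of_stationary_left {F : Type*} [NormedAddCommGroup F] [NormedSpace 𝕜 F]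
    {f : E → F} {f' : E →L[𝕜] F} (hρ : HasFDerivAt ρ (0 : E →L[𝕜] 𝕜) x)
    (hf : HasFDerivAt f f' x) : HasFDerivAt (fun y => ρ y • f y) (ρ x • f') x := by
  simpa using hρ.fun_smul hf

theorem hasFDerivAt_visible_of_stationary_albedo (g : 𝕜)
    (hρ : HasFDerivAt ρ (0 : E →L[𝕜] 𝕜) x) (hη : HasFDerivAt η η' x) :
    HasFDerivAt (fun y => g * ρ y * η y) ((g * ρ x) • η') x :=
  hasFDerivAt_smul_of_stationary_left ((hρ.const_mul g).congr_fderiv (by ext; simp)) hη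

theorem hasFDerivAt_heat_of_stationary_albedo (hρ : HasFDerivAt ρ (0 : E →L[𝕜] 𝕜) x)
    (hη : HasFDerivAt η η' x) :
    HasFDerivAt (fun y => (1 - ρ y) * η y) ((1 - ρ x) • η') x :=
  hasFDerivAt_smul_of_stationary_left ((hρ.const_sub 1).congr_fderiv neg_zero) hη

theorem hasFDerivAt_of_eventuallyEq_affine {S I : E → 𝕜} {S' : E →L[𝕜] 𝕜} {a b : 𝕜} (ha : a ≠ 0)
    (hS : HasFDerivAt S S' x) (hrel : ∀ᶠ y in nhds x, S y = a * I y - b) :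
    HasFDerivAt I (a⁻¹ • S') x := by
  refine ((hS.add_const b).const_mul a⁻¹).congr_of_eventuallyEq ?_
  filter_upwards [hrel] with y hy
  rw [hy, sub_add_cancel, inv_mul_cancel_left₀ ha]

theorem hasFDerivAt_thermal_of_stationary_albedo {c₁ c₃ : 𝕜} (hc₁ : c₁ ≠ 0)
    (hρ : HasFDerivAt ρ (0 : E →L[𝕜] 𝕜) x) (hη : HasFDerivAt η η' x)
    (hrel : ∀ᶠ y in nhds x, (1 - ρ y) * η y = c₁ * It y - c₃) :
    HasFDerivAt It ((c₁⁻¹ * (1 - ρ x)) • η') x := by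
  rw [mul_smul]
  exact hasFDerivAt_of_eventuallyEq_affine hc₁ (hasFDerivAt_heat_of_stationary_albedo hρ hη) hrel

end Stationary

theorem hasFDerivAt_zero_of_gradient_eq_zero {𝕜 E : Type*} [RCLike 𝕜] [NormedAddCommGroup E]
    [InnerProductSpace 𝕜 E] [CompleteSpace E] {f : E → 𝕜} {x : E}
    (hf : DifferentiableAt 𝕜 f x) (hf' : ∇ f x = 0) :
    HasFDerivAt f (0 : E →L[𝕜] 𝕜) x := by
  simpa [hf'] using hf.hasGradientAt.hasFDerivAt

theorem inner_smul_smul_self_pos {E : Type*} [NormedAddCommGroup E] [InnerProductSpace ℝ E]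
    {v : E} {a b : ℝ} (ha : 0 < a) (hb : 0 < b) (hv : v ≠ 0) : 0 < ⟪a • v, b • v⟫ := by
  rw [real_inner_smul_left, real_inner_smul_right]
  exact mul_pos ha (mul_pos hb (real_inner_self_pos.2 hv))

section Gradient

variable {E : Type*} [NormedAddCommGroup E] [InnerProductSpace ℝ E] [CompleteSpace E]

theorem gradient_eq_smul_gradient_of_hasFDerivAt {f η : E → ℝ} {x : E} {a : ℝ}
    (hf : HasFDerivAt f (a • fderiv ℝ η x) x) : ∇ f x = a • ∇ η x := by
  simp [gradient, hf.fderiv]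

theorem shading_edge_thermal_general {ρ η It : E → ℝ} {x : E} {g c₁ c₃ : ℝ}
    (hρ : DifferentiableAt ℝ ρ x) (hη : DifferentiableAt ℝ η x)
    (hρx : ρ x ∈ Set.Ioo (0 : ℝ) 1) (hg : 0 < g) (hc₁ : 0 < c₁)
    (hrel : ∀ᶠ y in nhds x, (1 - ρ y) * η y = c₁ * It y - c₃)
    (hρ' : ∇ ρ x = 0) (hη' : ∇ η x ≠ 0) :
    0 < ⟪∇ (fun y => g * ρ y * η y) x, ∇ It x⟫ := by
  have hρ₀ : HasFDerivAt ρ (0 : E →L[ℝ] ℝ) x := hasFDerivAt_zero_of_gradient_eq_zero hρ hρ'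
  have visible : ∇ (fun y => g * ρ y * η y) x = (g * ρ x) • ∇ η x :=
    gradient_eq_smul_gradient_of_hasFDerivAt
      (hasFDerivAt_visible_of_stationary_albedo g hρ₀ hη.hasFDerivAt)
  have thermal : ∇ It x = (c₁⁻¹ * (1 - ρ x)) • ∇ η x :=
    gradient_eq_smul_gradient_of_hasFDerivAt
      (hasFDerivAt_thermal_of_stationary_albedo hc₁.ne' hρ₀ hη.hasFDerivAt hrel)
  rw [visible, thermal]
  exact inner_smul_smul_self_pos (mul_pos hg hρx.1)
    (mul_pos (inv_pos.2 hc₁) (sub_pos.2 hρx.2)) hη'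

end Gradient

theorem shading_edge_thermal
    (ρ η It : ℝ → ℝ) (x g c₁ c₃ : ℝ)
    (hρ : DifferentiableAt ℝ ρ x) (hη : DifferentiableAt ℝ η x)
    (hIt : DifferentiableAt ℝ It x)
    (hρx : ρ x ∈ Set.Ioo (0 : ℝ) 1) (hηx : 0 < η x)
    (hg : 0 < g) (hc₁ : 0 < c₁)
    (hrel : ∀ᶠ y in nhds x, (1 - ρ y) * η y = c₁ * It y - c₃)
    (hρ' : deriv ρ x = 0) (hη' : deriv η x ≠ 0) :
    deriv (fun y => g * ρ y * η y) x * deriv It x > 0 := by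
  simpa [gradient_eq_deriv', mul_comm] using
    shading_edge_thermal_general hρ hη hρx hg hc₁ hrel
      (by rwa [gradient_eq_deriv']) (by rwa [gradient_eq_deriv'])
end
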